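/- Let X be a metric space that is δ-hyperbolic (four-point condition) for some δ ≥ 0, let x = {x_i} be a sequence in X tending to infinity with basepoint x₀, and let g be an isometry of X such that the sequence {g·x_i} is equivalent to {x_i}. Then for every a ∈ X, |η_x(g·a) − η_x(a) − η_x(g·x₀)| ≤ 16δ, where η_x(a) = limsup_{n→∞} (d(a,x_n) − d(x₀,x_n)). -/

import Mathlib

open Filter

/-!
If `(p, q)_b` is large, the four-point inequality for `b, c, q, p` says that
`d(b, ·) - d(c, ·)` takes the same value at `p` and `q` up to `2δ`. When `g` carries the end of `y`
to the end of `x`, apply this to `b = g a`, `c = g o'`, `p = x i`, `q = g (y j)`: invariance of the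
distance turns the value at `q` into `d(a, y j) - d(o', y j)`, whose limsup is the horofunction of
`y` at `a`. Taking the limsup in `i` and in `j` separately loses nothing, so the error stays `2δ`.
-/

section Limsup

variable {ι κ : Type*} {l l₁ : Filter ι} {l₂ : Filter κ}

theorem limsup_le_limsup_add_of_eventually_le [l.NeBot] {u v : ι → ℝ} {c : ℝ}
    (hu : l.IsCoboundedUnder (· ≤ ·) u) (hv : l.IsBoundedUnder (· ≤ ·) v)
    (hv' : l.IsCoboundedUnder (· ≤ ·) v) (h : ∀ᶠ i in l, u i ≤ v i + c) :
    limsup u l ≤ limsup v l + c := by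
  have hvc : l.IsBoundedUnder (· ≤ ·) fun i => v i + c :=
    isBoundedUnder_le_add hv isBoundedUnder_const
  calc limsup u l ≤ limsup (fun i => v i + c) l := limsup_le_limsup h hu hvc
    _ = limsup v l + c := limsup_add_const l v c hv hv'

theorem abs_limsup_sub_limsup_sub_le [l.NeBot] {u v : ι → ℝ} {c K : ℝ}
    (hu : l.IsBoundedUnder (· ≤ ·) (|u ·|)) (hv : l.IsBoundedUnder (· ≤ ·) (|v ·|))
    (h : ∀ᶠ i in l, |u i - v i - c| ≤ K) :
    |limsup u l - limsup v l - c| ≤ K := by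
  obtain ⟨hu_above, hu_below⟩ := isBoundedUnder_le_abs.1 hu
  obtain ⟨hv_above, hv_below⟩ := isBoundedUnder_le_abs.1 hv
  have huv : limsup u l ≤ limsup v l + (c + K) :=
    limsup_le_limsup_add_of_eventually_le hu_below.isCoboundedUnder_le hv_above
      hv_below.isCoboundedUnder_le <|
      h.mono fun i hi => by linarith [(abs_le.1 hi).2]
  have hvu : limsup v l ≤ limsup u l + (K - c) :=
    limsup_le_limsup_add_of_eventually_le hv_below.isCoboundedUnder_le hu_above
      hu_below.isCoboundedUnder_le <|
      h.mono fun i hi => by linarith [(abs_le.1 hi).1]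
  exact abs_le.2 ⟨by linarith, by linarith⟩

theorem abs_limsup_sub_limsup_sub_limsup_le [l₁.NeBot] [l₂.NeBot]
    {u v : ι → ℝ} {w : κ → ℝ} {K : ℝ}
    (hu : l₁.IsBoundedUnder (· ≤ ·) (|u ·|)) (hv : l₁.IsBoundedUnder (· ≤ ·) (|v ·|))
    (hw : l₂.IsBoundedUnder (· ≤ ·) (|w ·|))
    (h : ∀ᶠ p in l₁ ×ˢ l₂, |u p.1 - v p.1 - w p.2| ≤ K) :
    |limsup u l₁ - limsup v l₁ - limsup w l₂| ≤ K := by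
  refine abs_limsup_sub_limsup_sub_le hu hv (h.curry.mono fun i hi => ?_)
  have hw_const : |limsup w l₂ - limsup (fun _ => u i - v i) l₂ - 0| ≤ K :=
    abs_limsup_sub_limsup_sub_le hw isBoundedUnder_const <| by
      simpa only [sub_zero, abs_sub_comm] using hi
  simpa only [limsup_const, sub_zero, abs_sub_comm] using hw_const

end Limsup

/-- Gromov's four-point condition: the pseudometric space `X` is `δ`-hyperbolic. -/
def IsGromovHyperbolic (X : Type*) [PseudoMetricSpace X] (δ : ℝ) : Prop :=
  ∀ p₁ p₂ p₃ p₄ : X,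
    dist p₁ p₄ + dist p₂ p₃ ≤
      max (dist p₁ p₂ + dist p₃ p₄) (dist p₁ p₃ + dist p₂ p₄) + 2 * δ

section Hyperbolic

variable {X Y ι κ : Type*} [PseudoMetricSpace X] [PseudoMetricSpace Y]
  {l₁ : Filter ι} {l₂ : Filter κ} {δ : ℝ}

/-- The Gromov product `(p, q)_o` of `p` and `q` at the basepoint `o`. -/
noncomputable def gromovProduct (o p q : X) : ℝ :=
  (dist p o + dist q o - dist p q) / 2

/-- The families `x` along `l₁` and `y` along `l₂` are equivalent at infinity, i.e. they represent
the same point of the Gromov boundary: `(x i, y j)_o → ∞`. Equivalence of sequences is the case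
`l₁ = l₂ = atTop`. -/
def GromovEquivalent (o : X) (x : ι → X) (l₁ : Filter ι) (y : κ → X) (l₂ : Filter κ) : Prop :=
  Tendsto (fun p : ι × κ => gromovProduct o (x p.1) (y p.2)) (l₁ ×ˢ l₂) atTop

/-- The quasi-horofunction `η_x` of the family `x` along `l`, normalised at `o`. Since
`|d(a, x i) - d(o, x i)| ≤ d(a, o)`, it is a genuine limsup (not a junk value) whenever `l ≠ ⊥`. -/
noncomputable def quasiHorofunction (o : X) (x : ι → X) (l : Filter ι) (a : X) : ℝ :=
  limsup (fun i => dist a (x i) - dist o (x i)) l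

theorem isBoundedUnder_abs_dist_sub_dist (x : ι → X) (l : Filter ι) (a o : X) :
    l.IsBoundedUnder (· ≤ ·) fun i => |dist a (x i) - dist o (x i)| :=
  isBoundedUnder_of ⟨dist a o, fun i => abs_dist_sub_le a o (x i)⟩

theorem gromovProduct_sub_dist_le (o o' p q : X) :
    gromovProduct o p q - dist o o' ≤ gromovProduct o' p q := by
  have hp : dist p o ≤ dist p o' + dist o o' := dist_comm o o' ▸ dist_triangle p o' o
  have hq : dist q o ≤ dist q o' + dist o o' := dist_comm o o' ▸ dist_triangle q o' o
  unfold gromovProduct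
  linarith

theorem GromovEquivalent.change_basepoint {o : X} {x : ι → X} {y : κ → X}
    (h : GromovEquivalent o x l₁ y l₂) (o' : X) : GromovEquivalent o' x l₁ y l₂ :=
  tendsto_atTop_mono (fun _ => gromovProduct_sub_dist_le o o' _ _)
    (tendsto_atTop_add_const_right _ (-dist o o') h)

theorem IsGromovHyperbolic.dist_sub_dist_sub_le (hX : IsGromovHyperbolic X δ) {b c p q : X}
    (h : dist b c + δ < gromovProduct b p q) :
    dist b p - dist c p - (dist b q - dist c q) ≤ 2 * δ := by
  have hfour : dist b p + dist c q ≤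
      max (dist b c + dist q p) (dist b q + dist c p) + 2 * δ := hX b c q p
  have hfar : dist b c + dist q p + 2 * δ < dist b p + dist c q := by
    have htri : dist b q ≤ dist b c + dist c q := dist_triangle b c q
    rw [gromovProduct, dist_comm p b, dist_comm q b, dist_comm p q] at h
    linarith
  rcases le_max_iff.1 (sub_le_iff_le_add.2 hfour) with hle | hle <;> linarith

theorem IsGromovHyperbolic.eventually_abs_dist_sub_dist_sub_le (hX : IsGromovHyperbolic X δ)
    {o : X} {x : ι → X} {y : κ → X} (h : GromovEquivalent o x l₁ y l₂) (b c : X) :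
    ∀ᶠ p in l₁ ×ˢ l₂,
      |dist b (x p.1) - dist c (x p.1) - (dist b (y p.2) - dist c (y p.2))| ≤ 2 * δ := by
  filter_upwards [(h.change_basepoint b).eventually_gt_atTop (dist b c + δ),
    (h.change_basepoint c).eventually_gt_atTop (dist c b + δ)] with p hb hc
  have hbc := hX.dist_sub_dist_sub_le hb
  have hcb := hX.dist_sub_dist_sub_le hc
  exact abs_le.2 ⟨by linarith, by linarith⟩

theorem quasi_horofunction_isometry_general [l₁.NeBot] [l₂.NeBot] (hX : IsGromovHyperbolic X δ)
    {g : Y → X} (hg : Isometry g) {o : X} {x : ι → X} {y : κ → Y}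
    (h : GromovEquivalent o x l₁ (g ∘ y) l₂) (o' a : Y) :
    |quasiHorofunction o x l₁ (g a) - quasiHorofunction o' y l₂ a -
      quasiHorofunction o x l₁ (g o')| ≤ 2 * δ := by
  rw [sub_right_comm]
  refine abs_limsup_sub_limsup_sub_limsup_le (isBoundedUnder_abs_dist_sub_dist x l₁ (g a) o)
    (isBoundedUnder_abs_dist_sub_dist x l₁ (g o') o)
    (isBoundedUnder_abs_dist_sub_dist y l₂ a o') ?_
  filter_upwards [hX.eventually_abs_dist_sub_dist_sub_le h (g a) (g o')] with p hp
  simpa only [Function.comp_apply, hg.dist_eq, sub_sub_sub_cancel_right] using hp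

end Hyperbolic

/-- Let `X` be δ-hyperbolic (four-point condition), `{x i}` a sequence
tending to infinity, and `g` an isometry of `X` such that `{g (x i)}` is equivalent to
`{x i}` (i.e. `g` fixes the corresponding boundary point). Then for every `a ∈ X`,
`|η_x(g a) − η_x(a) − η_x(g (x 0))| ≤ 16δ`. -/
theorem quasi_horofunction_isometry
    (X : Type*) [MetricSpace X]
    (δ : ℝ) (hδ : 0 ≤ δ)
    (hhyp : ∀ p₁ p₂ p₃ p₄ : X,
      dist p₁ p₄ + dist p₂ p₃ ≤
        max (dist p₁ p₂ + dist p₃ p₄) (dist p₁ p₃ + dist p₂ p₄) + 2 * δ)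
    (x : ℕ → X)
    -- `{x i}` tends to infinity
    (hx : Tendsto
      (fun p : ℕ × ℕ =>
        (dist (x p.1) (x 0) + dist (x p.2) (x 0) - dist (x p.1) (x p.2)) / 2)
      atTop atTop)
    (g : X ≃ᵢ X)
    -- `{g (x i)}` is equivalent to `{x i}`
    (hg : Tendsto
      (fun p : ℕ × ℕ =>
        (dist (x p.1) (x 0) + dist (g (x p.2)) (x 0) - dist (x p.1) (g (x p.2))) / 2)
      atTop atTop)
    (a : X) :
    |limsup (fun m => dist (g a) (x m) - dist (x 0) (x m)) atTop -
      limsup (fun m => dist a (x m) - dist (x 0) (x m)) atTop -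
      limsup (fun m => dist (g (x 0)) (x m) - dist (x 0) (x m)) atTop| ≤ 16 * δ := by
  have hequiv : GromovEquivalent (x 0) x atTop (g ∘ x) atTop := by
    rwa [← prod_atTop_atTop_eq] at hg
  have hbound := quasi_horofunction_isometry_general hhyp g.isometry hequiv (x 0) a
  exact hbound.trans (by linarith)
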